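/- Let M₁, M₂ be positive integers, M = gcd(M₁, M₂), with s₁ = M₁/M even and s₂ = M₂/M odd. Then the set ((2π/M₁)ℤ) ∩ ((2π/M₂)(1/2 + ℤ)) ∩ ℝ⁺ equals {π/M + (2π/M)ℓ : ℓ ∈ ℕ ∪ {0}}, and its minimum element is π/M. -/

import Mathlib

open Real

/-!
Write `t = d * x` with `d = π / M`. Then `t` lies in both grids exactly when `s₁ * x` is an even
integer and `s₂ * x` is an odd one. As `s₁` and `s₂` are coprime, Bézout's identity
`u * s₁ + v * s₂ = 1` recovers `x = u * (s₁ * x) + v * (s₂ * x)` as an integer; since `s₁` is even,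
`v` is odd, so `x` is odd. The common points are therefore the odd multiples of `d`.
-/

theorem odd_right_of_isCoprime_of_even {a b : ℤ} (hab : IsCoprime a b) (ha : Even a) :
    Odd b :=
  Int.isCoprime_two_left.mp (hab.of_isCoprime_of_dvd_left ha.two_dvd)

theorem even_mul_and_odd_mul_iff_odd_of_isCoprime {R : Type*} [Ring R] {a b : ℤ}
    (hab : IsCoprime a b) (ha : Even a) (x : R) :
    ((∃ k : ℤ, a * x = 2 * k) ∧ ∃ k : ℤ, b * x = 2 * k + 1) ↔ ∃ k : ℤ, x = 2 * k + 1 := by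
  obtain ⟨b', hb⟩ := odd_right_of_isCoprime_of_even hab ha
  obtain ⟨u, v, bezout⟩ := hab
  obtain ⟨v', hv⟩ := odd_right_of_isCoprime_of_even ⟨u, b, by rwa [mul_comm b v]⟩ ha
  obtain ⟨a', rfl⟩ := even_iff_exists_two_mul.mp ha
  constructor
  · rintro ⟨⟨k, hk⟩, ⟨j, hj⟩⟩
    refine ⟨u * k + v * j + v', ?_⟩
    calc
      x = ((u * (2 * a') + v * b : ℤ) : R) * x := by rw [bezout, Int.cast_one, one_mul]
      _ = u * ((2 * a' : ℤ) * x) + v * (b * x) := by push_cast; noncomm_ring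
      _ = ((u * (2 * k) + v * (2 * j + 1) : ℤ) : R) := by rw [hk, hj]; push_cast; rfl
      _ = ((2 * (u * k + v * j + v') + 1 : ℤ) : R) := by congr 1; linear_combination hv
      _ = 2 * (u * k + v * j + v' : ℤ) + 1 := by push_cast; rfl
  · rintro ⟨k, rfl⟩
    refine ⟨⟨a' * (2 * k + 1), ?_⟩, ⟨b * k + b', ?_⟩⟩
    · push_cast
      noncomm_ring
    · have hodd : b * (2 * k + 1) = 2 * (b * k + b') + 1 := by linear_combination hb
      exact_mod_cast congrArg (Int.cast : ℤ → R) hodd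

theorem int_multiples_inter_half_int_multiples {K : Type*} [Field K] [CharZero K] {d : K}
    (hd : d ≠ 0) {a b : ℤ} (ha₀ : a ≠ 0) (hab : IsCoprime a b) (ha : Even a) :
    {t : K | ∃ k : ℤ, t = 2 * d / a * k} ∩ {t : K | ∃ k : ℤ, t = 2 * d / b * (1 / 2 + k)} =
      {t : K | ∃ k : ℤ, t = d + 2 * d * k} := by
  have ha' : (a : K) ≠ 0 := Int.cast_ne_zero.mpr ha₀
  have hb' : (b : K) ≠ 0 := by
    have hb : Odd b := odd_right_of_isCoprime_of_even hab ha
    exact Int.cast_ne_zero.mpr fun hb₀ ↦ Int.not_odd_zero (hb₀ ▸ hb)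
  ext t
  obtain ⟨x, rfl⟩ : ∃ x, t = d * x := ⟨t / d, (mul_div_cancel₀ t hd).symm⟩
  have mem_int_multiples (k : ℤ) : d * x = 2 * d / a * k ↔ a * x = 2 * k := by
    field_simp
  have mem_half_int_multiples (k : ℤ) : d * x = 2 * d / b * (1 / 2 + k) ↔ b * x = 2 * k + 1 := by
    field_simp
    rw [add_comm]
  have mem_odd_multiples (k : ℤ) : d * x = d + 2 * d * k ↔ x = 2 * k + 1 := by
    field_simp
    rw [add_comm]
  simp only [Set.mem_inter_iff, Set.mem_ofPred_eq, mem_int_multiples, mem_half_int_multiples,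
    mem_odd_multiples]
  exact even_mul_and_odd_mul_iff_odd_of_isCoprime hab ha x

section Progression

variable {R : Type*} [Ring R] [LinearOrder R] [IsStrictOrderedRing R] {a d : R}

theorem int_progression_inter_pos (ha : 0 < a) (had : a ≤ d) :
    {t : R | ∃ k : ℤ, t = a + d * k} ∩ {t : R | 0 < t} = {t : R | ∃ n : ℕ, t = a + d * n} := by
  have hd : 0 < d := ha.trans_le had
  ext t
  constructor
  · rintro ⟨⟨k, rfl⟩, hpos : 0 < a + d * k⟩
    have hk : (0 : R) < 1 + k := by
      refine pos_of_mul_pos_right (a := d) ?_ hd.le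
      calc
        0 < a + d * k := hpos
        _ ≤ d + d * k := by gcongr
        _ = d * (1 + k) := by rw [mul_add, mul_one]
    have hk_nonneg : 0 ≤ k := by
      have : (0 : ℤ) < 1 + k := by exact_mod_cast hk
      lia
    lift k to ℕ using hk_nonneg
    exact ⟨k, by rw [Int.cast_natCast]⟩
  · rintro ⟨n, rfl⟩
    exact ⟨⟨n, by rw [Int.cast_natCast]⟩, add_pos_of_pos_of_nonneg ha (by positivity)⟩

theorem isLeast_nat_progression (hd : 0 ≤ d) : IsLeast {t : R | ∃ n : ℕ, t = a + d * n} a := by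
  refine ⟨⟨0, by simp⟩, ?_⟩
  rintro _ ⟨n, rfl⟩
  exact le_add_of_nonneg_right (by positivity)

end Progression

theorem stmt_18 (M₁ M₂ : ℕ) (h₁ : 0 < M₁) (h₂ : 0 < M₂)
    (M s₁ s₂ : ℕ) (hM : M = Nat.gcd M₁ M₂) (hs₁ : s₁ = M₁ / M) (hs₂ : s₂ = M₂ / M)
    (he : Even s₁) (ho : Odd s₂) :
    ({t : ℝ | ∃ k : ℤ, t = (2 * π / M₁) * k} ∩
        {t : ℝ | ∃ k : ℤ, t = (2 * π / M₂) * (1 / 2 + k)} ∩ {t : ℝ | 0 < t} =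
      {t : ℝ | ∃ ℓ : ℕ, t = π / M + (2 * π / M) * ℓ}) ∧
    IsLeast ({t : ℝ | ∃ k : ℤ, t = (2 * π / M₁) * k} ∩
        {t : ℝ | ∃ k : ℤ, t = (2 * π / M₂) * (1 / 2 + k)} ∩ {t : ℝ | 0 < t})
      (π / M) := by
  have hM₀ : 0 < M := hM ▸ Nat.gcd_pos_of_pos_left _ h₁
  have hM₁ : M₁ = M * s₁ := by rw [hs₁, Nat.mul_div_cancel' (hM ▸ Nat.gcd_dvd_left _ _)]
  have hM₂ : M₂ = M * s₂ := by rw [hs₂, Nat.mul_div_cancel' (hM ▸ Nat.gcd_dvd_right _ _)]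
  have hcop : Nat.Coprime s₁ s₂ := by
    rw [hs₁, hs₂, hM]
    exact Nat.coprime_div_gcd_div_gcd (hM ▸ hM₀)
  have hs₁₀ : s₁ ≠ 0 := right_ne_zero_of_mul (hM₁ ▸ h₁.ne')
  have hd : 0 < π / M := by positivity
  have hstep (s : ℕ) : 2 * π / (M * s : ℕ) = 2 * (π / M) / (s : ℤ) := by
    push_cast
    ring
  rw [hM₁, hM₂, hstep s₁, hstep s₂, mul_div_assoc 2 π (M : ℝ),
    int_multiples_inter_half_int_multiples hd.ne' (mod_cast hs₁₀)
      (Nat.isCoprime_iff_coprime.mpr hcop) (mod_cast he),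
    int_progression_inter_pos hd (by linarith)]
  exact ⟨rfl, isLeast_nat_progression (by positivity)⟩
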